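/- arXiv:2103.04610 — 9 statements merged into one kernel-verified Lean document; each statement's English description precedes it below -/
import Mathlib

section
/- For every i ∈ ℤ, under the measure μ on A^ℤ the random variables ω ↦ ω(i) (the i-th coordinate) and ω ↦ τω are independent. -/
open MeasureTheory

/-- The cellular automaton `τ` defined by `(τ x)(i) = x(i) + x(i+1)`. -/
def tau {A : Type*} [Add A] (x : ℤ → A) : ℤ → A := fun i => x i + x (i + 1)

theorem measure_unique_aux {A : Type*} [Fintype A] [MeasurableSpace A]
    [MeasurableSingletonClass A] [Nonempty A]
    (μ ν : Measure (ℤ → A)) [IsProbabilityMeasure μ]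
    (h : ∀ (s : Finset ℤ) (y : ℤ → A),
      ν {ω | ∀ i ∈ s, ω i = y i} = μ {ω | ∀ i ∈ s, ω i = y i}) : ν = μ := by
  classical
  have hP : IsProjectiveLimit μ (fun I : Finset ℤ => μ.map I.restrict) := fun I => rfl
  refine IsProjectiveLimit.unique (P := fun I : Finset ℤ => μ.map I.restrict) ?_ hP
  intro I
  refine Measure.ext_of_singleton fun z => ?_
  rw [Measure.map_apply (by fun_prop) (measurableSet_singleton z),
    Measure.map_apply (by fun_prop) (measurableSet_singleton z)]
  have : (I.restrict ⁻¹' {z} : Set (ℤ → A)) =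
      {ω | ∀ i ∈ I, ω i = (if hi : i ∈ I then z ⟨i, hi⟩ else Classical.arbitrary A)} := by
    ext ω
    simp only [Set.mem_preimage, Set.mem_singleton_iff, Set.mem_setOf_eq]
    constructor
    · rintro rfl i hi
      simp [hi]
    · intro H
      funext ⟨i, hi⟩
      simpa [hi] using H i hi
  rw [this]
  exact h _ _

/-- The alternating translation, which `tau` does not see. -/
def altShift {A : Type*} [AddCommGroup A] (i : ℤ) (a : A) (x : ℤ → A) : ℤ → A :=
  fun j => x j + (Int.negOnePow (j - i) : ℤ) • a

theorem tau_altShift {A : Type*} [AddCommGroup A] (i : ℤ) (a : A) (x : ℤ → A) :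
    tau (altShift i a x) = tau x := by
  funext j
  have : j + 1 - i = (j - i) + 1 := by ring
  simp only [tau, altShift, this, Int.negOnePow_succ, Units.val_neg, neg_smul]
  abel

theorem measurable_of_fin {A : Type*} [Fintype A] [MeasurableSpace A]
    [MeasurableSingletonClass A] (f : A → A) : Measurable f := measurable_of_finite f

theorem measurable_tau {A : Type*} [Fintype A] [AddCommGroup A] [MeasurableSpace A]
    [MeasurableSingletonClass A] : Measurable (tau : (ℤ → A) → ℤ → A) := by
  refine measurable_pi_lambda _ fun j => ?_
  have h1 : Measurable (fun x : ℤ → A => (x j, x (j + 1))) :=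
    (measurable_pi_apply j).prodMk (measurable_pi_apply (j + 1))
  have h2 : Measurable (fun p : A × A => p.1 + p.2) := measurable_of_finite _
  exact h2.comp h1

theorem measurable_altShift {A : Type*} [Fintype A] [AddCommGroup A] [MeasurableSpace A]
    [MeasurableSingletonClass A] (i : ℤ) (a : A) : Measurable (altShift i a) := by
  refine measurable_pi_lambda _ fun j => ?_
  exact (measurable_of_finite (fun p : A => p + (Int.negOnePow (j - i) : ℤ) • a)).comp
    (measurable_pi_apply j)

/-- Under the product measure `μ` (i.i.d. uniform coordinates, characterized on cylinder
sets), for every `i ∈ ℤ` the coordinate `ω ↦ ω i` and the map `ω ↦ τ ω` are independent. -/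
theorem stmt3 {A : Type*} [Fintype A] [AddCommGroup A] [MeasurableSpace A]
    [MeasurableSingletonClass A] (hA : 1 < Fintype.card A)
    (μ : Measure (ℤ → A)) [IsProbabilityMeasure μ]
    (hμ : ∀ (s : Finset ℤ) (y : ℤ → A),
      μ {ω | ∀ i ∈ s, ω i = y i} = (Fintype.card A : ENNReal)⁻¹ ^ s.card)
    (i : ℤ) :
    ProbabilityTheory.IndepFun (fun ω : ℤ → A => ω i) tau μ := by
  classical
  have hinv : ∀ a : A, μ.map (altShift i a) = μ := by
    intro a
    refine measure_unique_aux _ _ fun s y => ?_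
    have hm : MeasurableSet {ω : ℤ → A | ∀ i ∈ s, ω i = y i} := by
      have : {ω : ℤ → A | ∀ i ∈ s, ω i = y i} = ⋂ i ∈ s, (fun ω : ℤ → A => ω i) ⁻¹' {y i} := by
        ext; simp
      rw [this]
      exact Finset.measurableSet_biInter _ fun j _ =>
        measurable_pi_apply j (measurableSet_singleton _)
    rw [Measure.map_apply (measurable_altShift i a) hm, hμ,
      ← hμ s (fun j => y j - (Int.negOnePow (j - i) : ℤ) • a)]
    congr 1
    ext ω
    simp [altShift, eq_sub_iff_add_eq]
  have hmi : ∀ b : A, MeasurableSet ((fun ω : ℤ → A => ω i) ⁻¹' {b}) := fun b =>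
    measurable_pi_apply i (measurableSet_singleton b)
  have hconst : ∀ (t : Set (ℤ → A)), MeasurableSet t → ∀ b : A,
      μ ((fun ω : ℤ → A => ω i) ⁻¹' {b} ∩ tau ⁻¹' t) =
        μ ((fun ω : ℤ → A => ω i) ⁻¹' {0} ∩ tau ⁻¹' t) := by
    intro t ht b
    conv_lhs => rw [← hinv b]
    rw [Measure.map_apply (measurable_altShift i b) ((hmi b).inter (measurable_tau ht))]
    congr 1
    ext ω
    simp only [Set.mem_preimage, Set.mem_inter_iff, tau_altShift]
    simp [altShift]
  have hsum : ∀ (t : Set (ℤ → A)), MeasurableSet t → ∀ s : Finset A,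
      μ ((fun ω : ℤ → A => ω i) ⁻¹' s ∩ tau ⁻¹' t) =
        s.card * μ ((fun ω : ℤ → A => ω i) ⁻¹' {0} ∩ tau ⁻¹' t) := by
    intro t ht s
    have : (fun ω : ℤ → A => ω i) ⁻¹' s ∩ tau ⁻¹' t =
        ⋃ b ∈ s, ((fun ω : ℤ → A => ω i) ⁻¹' {b} ∩ tau ⁻¹' t) := by
      ext; simp
    rw [this, measure_biUnion_finset]
    · simp [Finset.sum_congr rfl fun b _ => hconst t ht b]
    · intro b _ c _ hbc
      refine Set.disjoint_left.2 ?_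
      rintro ω ⟨h1, _⟩ ⟨h2, _⟩
      exact hbc (h1.symm.trans h2)
    · exact fun b _ => (hmi b).inter (measurable_tau ht)
  rw [ProbabilityTheory.indepFun_iff_measure_inter_preimage_eq_mul]
  intro s t _ ht
  have h1 := hsum t ht s.toFinset
  have h2 := hsum t ht Finset.univ
  have h3 := hsum Set.univ MeasurableSet.univ s.toFinset
  have h4 := hsum Set.univ MeasurableSet.univ Finset.univ
  simp only [Set.coe_toFinset, Finset.coe_univ, Set.preimage_univ, Set.univ_inter,
    Set.inter_univ, measure_univ, Finset.card_univ] at h1 h2 h3 h4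
  rw [h1, h2, h3]
  calc _ = (s.toFinset.card : ENNReal) * (1 * μ ((fun ω : ℤ → A => ω i) ⁻¹' {0} ∩ tau ⁻¹' t)) := by
        rw [one_mul]
    _ = _ := by rw [h4]; ring
end

section
/- Let N ≥ 0 be an integer and let j_0, j_1, …, j_N be integers such that j_{ℓ+1} ∈ {j_ℓ, j_ℓ + 1} for every 0 ≤ ℓ ≤ N−1. Then for any two configurations y, y' ∈ A^ℤ, if (τ^{N−ℓ} y)(j_ℓ) = (τ^{N−ℓ} y')(j_ℓ) for every 0 ≤ ℓ ≤ N, then y(i) = y'(i) for every i with j_0 ≤ i ≤ j_0 + N. (Equivalently, the block y[j_0, j_0+N] is a function of the values (τ^{N−ℓ} y)(j_ℓ), 0 ≤ ℓ ≤ N.) -/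
theorem path_mem (N : ℕ) (j : ℕ → ℤ)
    (hj : ∀ ℓ < N, j (ℓ + 1) = j ℓ ∨ j (ℓ + 1) = j ℓ + 1) :
    j 0 ≤ j N ∧ j N ≤ j 0 + N := by
  induction N with
  | zero => simp
  | succ n ih =>
    have h1 := ih (fun l hl => hj l (by omega))
    have h2 := hj n (by omega)
    push_cast
    omega

theorem stmt5_aux {A : Type*} [AddCommGroup A]
    (N : ℕ) (j : ℕ → ℤ)
    (hj : ∀ ℓ < N, j (ℓ + 1) = j ℓ ∨ j (ℓ + 1) = j ℓ + 1)
    (y y' : ℤ → A)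
    (h : ∀ ℓ ≤ N, (tau^[N - ℓ] y) (j ℓ) = (tau^[N - ℓ] y') (j ℓ)) :
    ∀ i : ℤ, j 0 ≤ i → i ≤ j 0 + N → y i = y' i := by
  induction N generalizing y y' with
  | zero =>
    intro i h1 h2
    have h3 := h 0 le_rfl
    have h4 : i = j 0 := by push_cast at h2; omega
    simpa [h4] using h3
  | succ n ih =>
    have hm := path_mem (n + 1) j hj
    have h0 := h (n + 1) le_rfl
    simp only [Nat.sub_self, Function.iterate_zero, id] at h0
    have ht := ih (fun l hl => hj l (by omega)) (tau y) (tau y') (fun l hl => by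
      have h1 := h l (by omega)
      rw [show n + 1 - l = (n - l) + 1 by omega] at h1
      simpa only [Function.iterate_succ, Function.comp] using h1)
    simp only [tau] at ht
    push_cast at hm ⊢
    generalize j (n + 1) = m at hm h0
    have up : ∀ k : ℕ, m + k ≤ j 0 + (n + 1) → y (m + k) = y' (m + k) := by
      intro k
      induction k with
      | zero => intro _; simpa using h0
      | succ k ihk =>
        intro hk
        push_cast at hk ⊢
        have h1 := ihk (by omega)
        have h2 := ht (m + k) (by omega) (by omega)
        rw [h1, add_assoc] at h2
        exact add_left_cancel h2
    have down : ∀ k : ℕ, j 0 ≤ m - k → y (m - k) = y' (m - k) := by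
      intro k
      induction k with
      | zero => intro _; simpa using h0
      | succ k ihk =>
        intro hk
        push_cast at hk ⊢
        have h1 := ihk (by omega)
        have h2 := ht (m - (k + 1)) (by omega) (by omega)
        rw [show m - ((k : ℤ) + 1) + 1 = m - k by ring, h1] at h2
        exact add_right_cancel h2
    intro i hi1 hi2
    rcases le_total m i with hmi | hmi
    · have h1 := up (i - m).toNat (by omega)
      rwa [show m + ((i - m).toNat : ℤ) = i by omega] at h1
    · have h1 := down (m - i).toNat (by omega)
      rwa [show m - ((m - i).toNat : ℤ) = i by omega] at h1

/-- If `j_0, …, j_N` is a path of integers with `j_{ℓ+1} ∈ {j_ℓ, j_ℓ + 1}`, then the block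
`y[j_0, j_0 + N]` of a configuration `y` is determined by the values `(τ^{N-ℓ} y)(j_ℓ)`,
`0 ≤ ℓ ≤ N`: if two configurations agree on these values, they agree on the whole block. -/
theorem stmt5 {A : Type*} [Fintype A] [AddCommGroup A] (hA : 1 < Fintype.card A)
    (N : ℕ) (j : ℕ → ℤ)
    (hj : ∀ ℓ < N, j (ℓ + 1) = j ℓ ∨ j (ℓ + 1) = j ℓ + 1)
    (y y' : ℤ → A)
    (h : ∀ ℓ ≤ N, (tau^[N - ℓ] y) (j ℓ) = (tau^[N - ℓ] y') (j ℓ)) :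
    ∀ i : ℤ, j 0 ≤ i → i ≤ j 0 + N → y i = y' i := by
  exact stmt5_aux N j hj y y' h
end

section
/- Define i_m := −⌊m/2⌋ for each m ∈ ℕ. Then for every n ∈ ℕ, the σ-algebra on A^ℤ generated by the countable family of functions { ω ↦ (τ^m ω)(i_m) : m ≥ n } equals the σ-algebra comap of τ^n, i.e. the σ-algebra generated by the single map ω ↦ τ^n ω (with the Borel σ-algebra on the target A^ℤ). -/
open MeasureTheory

lemma tri_closed (P : ℕ → ℤ → Prop) (n : ℕ)
    (hb : ∀ m, n ≤ m → P m (-((m : ℤ) / 2)))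
    (hr : ∀ m i, P (m + 1) i → P m i → P m (i + 1))
    (hl : ∀ m i, P (m + 1) i → P m (i + 1) → P m i) (i : ℤ) : P n i := by
  have key : ∀ k : ℕ, ∀ m, n ≤ m →
      P m (-((m : ℤ) / 2) + k) ∧ P m (-((m : ℤ) / 2) - k) := by
    intro k
    induction k with
    | zero => intro m hm; simpa using hb m hm
    | succ k ih =>
      have R0 : ∀ m, n ≤ m → m % 2 = 0 → P m (-((m : ℤ) / 2) + (k + 1 : ℕ)) := by
        intro m hm h
        have h1 := (ih (m + 1) (by omega)).1
        have h2 := (ih m hm).1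
        have e : (-(((m + 1 : ℕ) : ℤ) / 2) + k) = -((m : ℤ) / 2) + k := by omega
        rw [e] at h1
        have := hr m _ h1 h2
        convert this using 1
        push_cast; ring
      have L1 : ∀ m, n ≤ m → m % 2 = 1 → P m (-((m : ℤ) / 2) - (k + 1 : ℕ)) := by
        intro m hm h
        have h1 := (ih (m + 1) (by omega)).2
        have h2 := (ih m hm).2
        apply hl
        · convert h1 using 1
          omega
        · convert h2 using 1
          omega
      intro m hm
      rcases Nat.mod_two_eq_zero_or_one m with h | h
      · refine ⟨R0 m hm h, ?_⟩
        have h1 := L1 (m + 1) (by omega) (by omega)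
        apply hl
        · convert h1 using 1
          omega
        · convert (ih m hm).2 using 1
          omega
      · refine ⟨?_, L1 m hm h⟩
        have h1 := R0 (m + 1) (by omega) (by omega)
        have e : (-(((m + 1 : ℕ) : ℤ) / 2) + (k + 1 : ℕ)) = -((m : ℤ) / 2) + k := by omega
        rw [e] at h1
        have := hr m _ h1 (ih m hm).1
        convert this using 1
        push_cast; ring
  rcases le_total 0 (i + (n : ℤ) / 2) with h | h
  · convert (key (i + (n : ℤ) / 2).toNat n le_rfl).1 using 1
    omega
  · convert (key (-(i + (n : ℤ) / 2)).toNat n le_rfl).2 using 1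
    omega

/-- With `i_m := -⌊m/2⌋`, for every `n ∈ ℕ` the σ-algebra on `A^ℤ` generated by the family of
maps `ω ↦ (τ^m ω)(i_m)`, `m ≥ n`, equals the σ-algebra generated by the single map
`ω ↦ τ^n ω`. -/
theorem stmt6 {A : Type*} [Fintype A] [AddCommGroup A] [MeasurableSpace A]
    [MeasurableSingletonClass A] (hA : 1 < Fintype.card A) (n : ℕ) :
    (⨆ m : ℕ, ⨆ _ : n ≤ m,
        MeasurableSpace.comap (fun ω : ℤ → A => (tau^[m] ω) (-((m : ℤ) / 2)))
          (inferInstance : MeasurableSpace A))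
      = MeasurableSpace.comap (fun ω : ℤ → A => tau^[n] ω)
          (inferInstance : MeasurableSpace (ℤ → A)) := by
  have hadd : Measurable (fun p : A × A => p.1 + p.2) := Measurable.of_discrete
  have hsub : Measurable (fun p : A × A => p.1 - p.2) := Measurable.of_discrete
  have htau : Measurable (tau : (ℤ → A) → (ℤ → A)) := by
    refine measurable_pi_lambda _ fun i => ?_
    have h1 : Measurable (fun x : ℤ → A => x i) := measurable_pi_apply i
    have h2 : Measurable (fun x : ℤ → A => x (i + 1)) := measurable_pi_apply (i + 1)
    exact hadd.comp (h1.prodMk h2)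
  have hstep : ∀ m (i : ℤ) (ω : ℤ → A),
      tau^[m + 1] ω i = tau^[m] ω i + tau^[m] ω (i + 1) := by
    intro m i ω
    rw [Function.iterate_succ_apply']
    rfl
  apply le_antisymm
  · refine iSup₂_le fun m hm => ?_
    obtain ⟨d, rfl⟩ := Nat.exists_eq_add_of_le' hm
    have e : (fun ω : ℤ → A => (tau^[d + n] ω) (-(((d + n : ℕ) : ℤ) / 2)))
        = (fun x : ℤ → A => (tau^[d] x) (-(((d + n : ℕ) : ℤ) / 2)))
          ∘ (fun ω : ℤ → A => tau^[n] ω) := by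
      funext ω
      simp [Function.iterate_add_apply]
    rw [e, ← MeasurableSpace.comap_comp]
    apply MeasurableSpace.comap_mono
    exact ((measurable_pi_apply _).comp (htau.iterate d)).comap_le
  · set S : MeasurableSpace (ℤ → A) := ⨆ m : ℕ, ⨆ _ : n ≤ m,
        MeasurableSpace.comap (fun ω : ℤ → A => (tau^[m] ω) (-((m : ℤ) / 2)))
          (inferInstance : MeasurableSpace A) with hS
    rw [← measurable_iff_comap_le]
    refine @measurable_pi_lambda _ _ _ S _ _ fun i => ?_
    refine tri_closed (fun m i => Measurable[S] fun ω : ℤ → A => tau^[m] ω i) n ?_ ?_ ?_ i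
    · intro m hm
      rw [measurable_iff_comap_le]
      exact le_iSup₂_of_le m hm le_rfl
    · intro m i h1 h2
      have := hsub.comp (Measurable.prodMk (m := S) h1 h2)
      convert this using 1
      funext ω
      simp [hstep]
    · intro m i h1 h2
      have := hsub.comp (Measurable.prodMk (m := S) h1 h2)
      convert this using 1
      funext ω
      simp [hstep]
end

section
/- The Markov kernel τ_ε on A^ℤ is ergodic in the Markov sense: for every probability measure ν on A^ℤ, the sequence of probability measures obtained by applying the kernel n times to ν (i.e. ν τ_ε^n) converges, in the topology of weak convergence of probability measures on the compact metrizable space A^ℤ, to the product measure μ as n → ∞. In particular, μ is the unique τ_ε-invariant probability measure on A^ℤ. -/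
open MeasureTheory Filter

/-- Applying the Markov kernel `τ_ε` to a probability measure `ρ`:
`ρ ↦ ∫ τ_ε(x,·) dρ(x)`, where `τ_ε(x,·)` is the law of `τ x + ξ`, `ξ ~ ν_ε`. -/
noncomputable def stepTauEps {A : Type*} [AddCommGroup A] [MeasurableSpace A]
    (νε : Measure (ℤ → A)) (ρ : Measure (ℤ → A)) : Measure (ℤ → A) :=
  ρ.bind (fun x => Measure.map (fun ξ => tau x + ξ) νε)


section helpers
set_option linter.unusedSectionVars false
variable {A : Type*} [Fintype A] [AddCommGroup A] [MeasurableSpace A] [MeasurableSingletonClass A]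

/-- The character of `A^ℤ` with components `ψ i`, `i ∈ s`. -/
noncomputable def chE (s : Finset ℤ) (ψ : ℤ → AddChar A ℂ) (x : ℤ → A) : ℂ := ∏ i ∈ s, ψ i (x i)

lemma measurable_tau_s9 : Measurable (tau : (ℤ → A) → (ℤ → A)) := by
  unfold tau
  refine measurable_pi_lambda _ fun i => ?_
  have : Measurable (fun p : A × A => p.1 + p.2) := measurable_of_finite _
  have h2 : Measurable (fun x : ℤ → A => (x i, x (i+1))) :=
    (measurable_pi_apply i).prodMk (measurable_pi_apply (i+1))
  exact this.comp h2

lemma measurable_addPi : Measurable (fun p : (ℤ → A) × (ℤ → A) => p.1 + p.2) := by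
  refine measurable_pi_lambda _ fun i => ?_
  have : Measurable (fun p : A × A => p.1 + p.2) := measurable_of_finite _
  have h2 : Measurable (fun x : (ℤ → A) × (ℤ → A) => (x.1 i, x.2 i)) :=
    ((measurable_pi_apply i).comp measurable_fst).prodMk
      ((measurable_pi_apply i).comp measurable_snd)
  exact this.comp h2

lemma measurable_stepfun : Measurable (fun p : (ℤ → A) × (ℤ → A) => tau p.1 + p.2) :=
  measurable_addPi.comp ((measurable_tau_s9.comp measurable_fst).prodMk measurable_snd)

lemma measurable_chE (s : Finset ℤ) (ψ : ℤ → AddChar A ℂ) : Measurable (chE s ψ) := by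
  unfold chE
  refine Finset.measurable_fun_prod s fun i _ => ?_
  exact (measurable_of_finite (ψ i)).comp (measurable_pi_apply i)

lemma stepTauEps_eq (P ρ : Measure (ℤ → A)) [IsProbabilityMeasure P] [IsProbabilityMeasure ρ] :
    stepTauEps P ρ = (ρ.prod P).map (fun p => tau p.1 + p.2) := by
  have h0 : ∀ x : ℤ → A, Measure.map (fun ξ => tau x + ξ) P
      = Measure.map (fun p : (ℤ → A) × (ℤ → A) => tau p.1 + p.2) (Measure.map (Prod.mk x) P) := by
    intro x
    rw [Measure.map_map measurable_stepfun measurable_prodMk_left]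
    rfl
  have hm : Measurable (fun x : ℤ → A => Measure.map (fun ξ => tau x + ξ) P) := by
    simp_rw [h0]
    exact (Measure.measurable_map _ measurable_stepfun).comp Measurable.map_prodMk_left
  unfold stepTauEps
  ext t ht
  rw [Measure.bind_apply ht hm.aemeasurable, Measure.map_apply measurable_stepfun ht,
    Measure.prod_apply (measurable_stepfun ht)]
  refine lintegral_congr fun x => ?_
  rw [h0, Measure.map_apply measurable_stepfun ht,
    Measure.map_apply measurable_prodMk_left (measurable_stepfun ht)]

instance isProb_step (P ρ : Measure (ℤ → A)) [IsProbabilityMeasure P] [IsProbabilityMeasure ρ] :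
    IsProbabilityMeasure (stepTauEps P ρ) := by
  rw [stepTauEps_eq]
  exact Measure.isProbabilityMeasure_map measurable_stepfun.aemeasurable

lemma isProb_iter (P ρ : Measure (ℤ → A)) [IsProbabilityMeasure P] [IsProbabilityMeasure ρ] (n : ℕ) :
    IsProbabilityMeasure ((stepTauEps P)^[n] ρ) := by
  induction n with
  | zero => simpa
  | succ n ih => rw [Function.iterate_succ_apply']; infer_instance

lemma chE_add (s : Finset ℤ) (ψ : ℤ → AddChar A ℂ) (x y : ℤ → A) :
    chE s ψ (x + y) = chE s ψ x * chE s ψ y := by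
  simp [chE, AddChar.map_add_eq_mul, Finset.prod_mul_distrib]

lemma integral_step (P ρ : Measure (ℤ → A)) [IsProbabilityMeasure P] [IsProbabilityMeasure ρ]
    (s : Finset ℤ) (ψ : ℤ → AddChar A ℂ) :
    ∫ x, chE s ψ x ∂(stepTauEps P ρ) = (∫ x, chE s ψ (tau x) ∂ρ) * ∫ x, chE s ψ x ∂P := by
  rw [stepTauEps_eq, integral_map measurable_stepfun.aemeasurable
    (measurable_chE s ψ).aestronglyMeasurable]
  simp_rw [chE_add]
  exact integral_prod_mul (fun x => chE s ψ (tau x)) (chE s ψ)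

lemma chE_tau (s : Finset ℤ) (ψ : ℤ → AddChar A ℂ) (hs : ∀ i ∉ s, ψ i = 1) (x : ℤ → A) :
    chE s ψ (tau x) = chE (s ∪ s.image (· + 1)) (fun i => ψ i * ψ (i - 1)) x := by
  simp only [chE, tau, AddChar.map_add_eq_mul, Finset.prod_mul_distrib, AddChar.mul_apply]
  congr 1
  · refine Finset.prod_subset Finset.subset_union_left fun i _ hi => ?_
    simp [hs i hi]
  · rw [← Finset.prod_subset (Finset.subset_union_right (s₁ := s) (s₂ := s.image (· + 1))),
      Finset.prod_image]
    · simp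
    · intro a _ b _ h
      simpa using h
    · intro i _ hi
      rw [hs (i-1)]
      · simp
      · intro h
        exact hi (Finset.mem_image.2 ⟨i - 1, h, by ring⟩)

lemma integral_chE (P : Measure (ℤ → A)) [IsProbabilityMeasure P] (w : A → ENNReal)
    (hP : ∀ (s : Finset ℤ) (y : ℤ → A), P {ξ | ∀ i ∈ s, ξ i = y i} = ∏ i ∈ s, w (y i))
    (s : Finset ℤ) (ψ : ℤ → AddChar A ℂ) :
    ∫ x, chE s ψ x ∂P = ∏ i ∈ s, ∑ a, ((w a).toReal : ℂ) * ψ i a := by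
  classical
  set m : Measure A := P.map (fun x => x 0) with hm
  have hm0 : Measurable (fun x : ℤ → A => x 0) := measurable_pi_apply 0
  have : IsProbabilityMeasure m := Measure.isProbabilityMeasure_map hm0.aemeasurable
  have hma : ∀ a, m {a} = w a := by
    intro a
    rw [hm, Measure.map_apply hm0 (measurableSet_singleton a)]
    have := hP {0} (fun _ => a)
    simp only [Finset.mem_singleton, forall_eq, Finset.prod_singleton] at this
    exact this
  have hr : Measurable (fun (x : ℤ → A) (i : s) => x i) :=
    measurable_pi_lambda _ fun i => measurable_pi_apply _
  have hpi : P.map (fun (x : ℤ → A) (i : s) => x i) = Measure.pi (fun _ : s => m) := by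
    refine Measure.ext_of_singleton fun y => ?_
    rw [Measure.map_apply hr (measurableSet_singleton y), Measure.pi_singleton]
    have := hP s (fun i => if h : i ∈ s then y ⟨i, h⟩ else 0)
    convert this using 1
    · congr 1
      ext ξ
      simp only [Set.mem_preimage, Set.mem_singleton_iff, funext_iff, Set.mem_ofPred_eq]
      constructor
      · intro h i hi
        simpa [hi] using h ⟨i, hi⟩
      · rintro h ⟨i, hi⟩
        simpa [hi] using h i hi
    · rw [← Finset.prod_coe_sort s]
      simp [hma]
  have h1 : ∫ x, chE s ψ x ∂P
      = ∫ y : s → A, ∏ i : s, ψ i (y i) ∂(P.map (fun (x : ℤ → A) (i : s) => x i)) := by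
    rw [integral_map hr.aemeasurable (measurable_of_finite _).aestronglyMeasurable]
    simp only [chE]
    congr 1
    ext x
    rw [← Finset.prod_coe_sort s]
  rw [h1, hpi, integral_fintype_prod_eq_prod (fun (i : s) a => ψ i a), ← Finset.prod_coe_sort s]
  refine Finset.prod_congr rfl fun i _ => ?_
  rw [integral_fintype .of_finite]
  simp [measureReal_def, hma]


lemma decay (P : Measure (ℤ → A)) [IsProbabilityMeasure P] (w : A → ENNReal)
    (hP : ∀ (s : Finset ℤ) (y : ℤ → A), P {ξ | ∀ i ∈ s, ξ i = y i} = ∏ i ∈ s, w (y i))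
    (r : ℝ) (hr0 : 0 ≤ r) (hr1 : r ≤ 1)
    (hw1 : ∑ a, ((w a).toReal : ℂ) = 1)
    (hw : ∀ ψ : AddChar A ℂ, ψ ≠ 1 → ‖∑ a, ((w a).toReal : ℂ) * ψ a‖ ≤ r)
    (s : Finset ℤ) (ψ : ℤ → AddChar A ℂ) (hne : ∃ i ∈ s, ψ i ≠ 1) :
    ‖∫ x, chE s ψ x ∂P‖ ≤ r := by
  classical
  obtain ⟨i, hi, hne⟩ := hne
  rw [integral_chE P w hP, norm_prod, ← Finset.mul_prod_erase s _ hi]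
  calc _ ≤ r * 1 := by
        refine mul_le_mul (hw _ hne) ?_ (Finset.prod_nonneg fun _ _ => norm_nonneg _) hr0
        refine Finset.prod_le_one (fun _ _ => norm_nonneg _) fun j _ => ?_
        by_cases h : ψ j = 1
        · simp [h, hw1]
        · exact (hw _ h).trans hr1
    _ = r := mul_one r

lemma chE_iter (P : Measure (ℤ → A)) [IsProbabilityMeasure P] (r : ℝ) (hr0 : 0 ≤ r)
    (hP : ∀ (s : Finset ℤ) (ψ : ℤ → AddChar A ℂ), (∃ i ∈ s, ψ i ≠ 1) →
      ‖∫ x, chE s ψ x ∂P‖ ≤ r)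
    (ρ : Measure (ℤ → A)) [IsProbabilityMeasure ρ] (n : ℕ) :
    ∀ (s : Finset ℤ) (ψ : ℤ → AddChar A ℂ), (∀ i ∉ s, ψ i = 1) → (∃ i ∈ s, ψ i ≠ 1) →
      ‖∫ x, chE s ψ x ∂((stepTauEps P)^[n] ρ)‖ ≤ r ^ n := by
  classical
  induction n with
  | zero =>
    intro s ψ _ _
    simp only [Function.iterate_zero, id_eq, pow_zero]
    refine (norm_integral_le_of_norm_le_const (C := 1) (ae_of_all _ fun x => ?_)).trans ?_
    · simp [chE, norm_prod]
    · simp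
  | succ n ih =>
    intro s ψ hs hne
    have := isProb_iter P ρ n
    rw [Function.iterate_succ_apply', integral_step, norm_mul, pow_succ]
    refine mul_le_mul ?_ (hP s ψ hne) (norm_nonneg _) (pow_nonneg hr0 n)
    simp_rw [chE_tau s ψ hs]
    refine ih _ _ ?_ ?_
    · intro i hi
      simp only [Finset.mem_union, Finset.mem_image, not_or, not_exists, not_and] at hi
      have h1 := hs i hi.1
      have h2 := hs (i - 1) fun h => hi.2 _ h (by ring)
      simp [h1, h2]
    · let t := s.filter (fun i => ψ i ≠ 1)
      have ht : t.Nonempty := by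
        obtain ⟨i, hi, h⟩ := hne
        exact ⟨i, by simp [t, hi, h]⟩
      have hmem := t.min'_mem ht
      refine ⟨t.min' ht, ?_, ?_⟩
      · exact Finset.mem_union_left _ (Finset.mem_filter.1 hmem).1
      · have h1 : ψ (t.min' ht - 1) = 1 := by
          by_contra h
          have h3 : t.min' ht - 1 ∈ t := by
            refine Finset.mem_filter.2 ⟨?_, h⟩
            by_contra h4
            exact h (hs _ h4)
          have := t.min'_le _ h3
          omega
        rw [h1, mul_one]
        exact (Finset.mem_filter.1 hmem).2

lemma chE_tendsto (P μ : Measure (ℤ → A)) [IsProbabilityMeasure P] [IsProbabilityMeasure μ]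
    (r : ℝ) (hr0 : 0 ≤ r) (hr1 : r < 1)
    (hP : ∀ (s : Finset ℤ) (ψ : ℤ → AddChar A ℂ), (∃ i ∈ s, ψ i ≠ 1) →
      ‖∫ x, chE s ψ x ∂P‖ ≤ r)
    (hμ : ∀ (s : Finset ℤ) (ψ : ℤ → AddChar A ℂ), (∃ i ∈ s, ψ i ≠ 1) →
      ‖∫ x, chE s ψ x ∂μ‖ ≤ 0)
    (ρ : Measure (ℤ → A)) [IsProbabilityMeasure ρ]
    (s : Finset ℤ) (ψ : ℤ → AddChar A ℂ) (hs : ∀ i ∉ s, ψ i = 1) :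
    Tendsto (fun n : ℕ => ∫ x, chE s ψ x ∂((stepTauEps P)^[n] ρ)) atTop
      (nhds (∫ x, chE s ψ x ∂μ)) := by
  by_cases hne : ∃ i ∈ s, ψ i ≠ 1
  · rw [norm_le_zero_iff.1 (hμ s ψ hne)]
    exact squeeze_zero_norm (fun n => chE_iter P r hr0 hP ρ n s ψ hs hne)
      (tendsto_pow_atTop_nhds_zero_of_lt_one hr0 hr1)
  · push Not at hne
    have h1 : ∀ x, chE s ψ x = 1 := fun x => Finset.prod_eq_one fun i hi => by simp [hne i hi]
    have := isProb_iter P ρ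
    simp [h1]

variable [TopologicalSpace A] [DiscreteTopology A]

lemma continuous_chE (s : Finset ℤ) (ψ : ℤ → AddChar A ℂ) : Continuous (chE s ψ) := by
  unfold chE
  exact continuous_finsetProd s fun i _ =>
    (continuous_of_discreteTopology (f := ψ i)).comp (continuous_apply i)

variable (A) in
/-- The multiplicative monoid of characters of `A^ℤ`. -/
noncomputable def chMon : Submonoid C(ℤ → A, ℂ) where
  carrier := {f | ∃ (s : Finset ℤ) (ψ : ℤ → AddChar A ℂ), (∀ i ∉ s, ψ i = 1) ∧
    ∀ x, f x = chE s ψ x}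
  one_mem' := ⟨∅, fun _ => 1, by simp, by simp [chE]⟩
  mul_mem' := by
    classical
    rintro f g ⟨s, ψ, hs, hf⟩ ⟨t, φ, ht, hg⟩
    refine ⟨s ∪ t, fun i => ψ i * φ i, ?_, fun x => ?_⟩
    · intro i hi
      simp only [Finset.mem_union, not_or] at hi
      simp [hs i hi.1, ht i hi.2]
    · simp only [ContinuousMap.mul_apply, hf, hg, chE, AddChar.mul_apply, Finset.prod_mul_distrib]
      congr 1
      · exact Finset.prod_subset Finset.subset_union_left fun i _ hi => by simp [hs i hi]
      · exact Finset.prod_subset Finset.subset_union_right fun i _ hi => by simp [ht i hi]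

lemma chMon_star (f : C(ℤ → A, ℂ)) (hf : f ∈ chMon A) : star f ∈ chMon A := by
  obtain ⟨s, ψ, hs, hf⟩ := hf
  refine ⟨s, fun i => (ψ i)⁻¹, fun i hi => by simp [hs i hi], fun x => ?_⟩
  simp only [ContinuousMap.star_apply, hf, chE, star_prod]
  refine Finset.prod_congr rfl fun i _ => ?_
  rw [AddChar.inv_apply, AddChar.map_neg_eq_conj]
  rfl

variable (A) in
/-- The star algebra of trigonometric polynomials. -/
noncomputable def chAlg : StarSubalgebra ℂ C(ℤ → A, ℂ) where
  toSubalgebra := Algebra.adjoin ℂ (chMon A : Set C(ℤ → A, ℂ))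
  star_mem' := by
    intro a ha
    change a ∈ Algebra.adjoin ℂ (chMon A : Set C(ℤ → A, ℂ)) at ha
    change star a ∈ Algebra.adjoin ℂ (chMon A : Set C(ℤ → A, ℂ))
    induction ha using Algebra.adjoin_induction with
    | mem x hx => exact Algebra.subset_adjoin (chMon_star x hx)
    | algebraMap r =>
      rw [← algebraMap_star_comm]
      exact Subalgebra.algebraMap_mem _ _
    | add x y _ _ hx hy => rw [star_add]; exact add_mem hx hy
    | mul x y _ _ hx hy => rw [star_mul]; exact mul_mem hy hx

lemma chAlg_sep : (chAlg A).SeparatesPoints := by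
  classical
  intro x y hxy
  obtain ⟨i, hi⟩ := Function.ne_iff.1 hxy
  obtain ⟨ψ, hψ⟩ := AddChar.exists_apply_ne_zero.2 (sub_ne_zero.2 hi)
  let Ψ : ℤ → AddChar A ℂ := Pi.mulSingle i ψ
  refine ⟨chE {i} Ψ, ⟨⟨chE {i} Ψ, continuous_chE _ _⟩, ?_, rfl⟩, ?_⟩
  · refine Algebra.subset_adjoin ⟨{i}, Ψ, ?_, fun x => rfl⟩
    intro j hj
    simp only [Finset.mem_singleton] at hj
    simp [Ψ, Pi.mulSingle_eq_of_ne hj]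
  · simp only [chE, Finset.prod_singleton, Ψ, Pi.mulSingle_eq_same]
    intro h
    apply hψ
    rw [AddChar.map_sub_eq_div, h, div_self]
    exact (ψ.val_isUnit _).ne_zero

lemma integrable_cm {ρ : Measure (ℤ → A)} [IsProbabilityMeasure ρ] (f : C(ℤ → A, ℂ)) :
    Integrable f ρ := by
  have : BorelSpace A := ⟨by
    rw [borel_eq_top_of_discrete]
    exact MeasurableSpace.ext fun s => by simp [Set.Finite.measurableSet (Set.toFinite s)]⟩
  refine Integrable.of_bound (C := ‖f‖) f.continuous.measurable.aestronglyMeasurable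
    (ae_of_all _ fun x => f.norm_coe_le_norm x)

lemma tendsto_of_char (M : ℕ → Measure (ℤ → A)) (μ : Measure (ℤ → A)) [IsProbabilityMeasure μ]
    [∀ n, IsProbabilityMeasure (M n)]
    (h : ∀ (s : Finset ℤ) (ψ : ℤ → AddChar A ℂ), (∀ i ∉ s, ψ i = 1) →
      Tendsto (fun n : ℕ => ∫ x, chE s ψ x ∂(M n)) atTop (nhds (∫ x, chE s ψ x ∂μ)))
    (g : C(ℤ → A, ℂ)) :
    Tendsto (fun n : ℕ => ∫ x, g x ∂(M n)) atTop (nhds (∫ x, g x ∂μ)) := by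
  have hpoly : ∀ f ∈ chAlg A,
      Tendsto (fun n : ℕ => ∫ x, f x ∂(M n)) atTop (nhds (∫ x, f x ∂μ)) := by
    intro f hf
    replace hf : f ∈ Submodule.span ℂ (chMon A : Set C(ℤ → A, ℂ)) := by
      have h2 : f ∈ Subalgebra.toSubmodule (Algebra.adjoin ℂ (chMon A : Set C(ℤ → A, ℂ))) := hf
      rwa [Algebra.adjoin_eq_span, Submonoid.closure_eq] at h2
    induction hf using Submodule.span_induction with
    | mem x hx =>
      obtain ⟨s, ψ, hs, hx⟩ := hx
      simp_rw [hx]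
      exact h s ψ hs
    | zero => simp
    | add x y _ _ hx hy =>
      simp only [ContinuousMap.add_apply]
      simp_rw [integral_add (integrable_cm x) (integrable_cm y)]
      exact hx.add hy
    | smul a x _ hx =>
      simp only [ContinuousMap.smul_apply, integral_smul]
      exact hx.const_smul a
  have hg : g ∈ closure (chAlg A : Set C(ℤ → A, ℂ)) := by
    have h1 := ContinuousMap.starSubalgebra_topologicalClosure_eq_top_of_separatesPoints
      (chAlg A) chAlg_sep
    rw [← StarSubalgebra.topologicalClosure_coe, h1]
    trivial
  have hbd : ∀ (ρ : Measure (ℤ → A)) [IsProbabilityMeasure ρ] (f : C(ℤ → A, ℂ)),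
      dist (∫ x, g x ∂ρ) (∫ x, f x ∂ρ) ≤ dist g f := by
    intro ρ _ f
    rw [dist_eq_norm, ← integral_sub (integrable_cm g) (integrable_cm f)]
    refine (norm_integral_le_of_norm_le_const (C := dist g f) (ae_of_all _ fun x => ?_)).trans ?_
    · rw [← dist_eq_norm]; exact ContinuousMap.dist_apply_le_dist x
    · simp
  rw [Metric.tendsto_atTop]
  intro δ hδ
  obtain ⟨f, hf, hgf⟩ := Metric.mem_closure_iff.1 hg (δ/3) (by positivity)
  obtain ⟨N, hN⟩ := Metric.tendsto_atTop.1 (hpoly f hf) (δ/3) (by positivity)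
  refine ⟨N, fun n hn => ?_⟩
  have h1 := hbd (M n) f
  have h2 := hbd μ f
  have h3 := hN n hn
  rw [dist_comm] at h2
  have h4 := dist_triangle4 (∫ x, g x ∂(M n)) (∫ x, f x ∂(M n)) (∫ x, f x ∂μ) (∫ x, g x ∂μ)
  linarith

lemma tendsto_real (M : ℕ → Measure (ℤ → A)) (μ : Measure (ℤ → A)) [IsProbabilityMeasure μ]
    [∀ n, IsProbabilityMeasure (M n)]
    (h : ∀ (s : Finset ℤ) (ψ : ℤ → AddChar A ℂ), (∀ i ∉ s, ψ i = 1) →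
      Tendsto (fun n : ℕ => ∫ x, chE s ψ x ∂(M n)) atTop (nhds (∫ x, chE s ψ x ∂μ)))
    (g : (ℤ → A) → ℝ) (hg : Continuous g) :
    Tendsto (fun n : ℕ => ∫ x, g x ∂(M n)) atTop (nhds (∫ x, g x ∂μ)) := by
  have h1 := tendsto_of_char M μ h ⟨fun x => (g x : ℂ), by fun_prop⟩
  simp only [ContinuousMap.coe_mk, integral_complex_ofReal] at h1
  exact_mod_cast (Complex.continuous_re.tendsto _).comp h1

lemma meas_ext (ν μ : Measure (ℤ → A)) [IsProbabilityMeasure μ] [IsProbabilityMeasure ν]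
    (h : ∀ g : (ℤ → A) → ℝ, Continuous g → ∫ x, g x ∂ν = ∫ x, g x ∂μ) : ν = μ := by
  have : BorelSpace A := ⟨by
    rw [borel_eq_top_of_discrete]
    exact MeasurableSpace.ext fun s => by simp [Set.Finite.measurableSet (Set.toFinite s)]⟩
  have : TopologicalSpace.PseudoMetrizableSpace (ℤ → A) := inferInstance
  letI := TopologicalSpace.pseudoMetrizableSpacePseudoMetric (ℤ → A)
  exact ext_of_forall_integral_eq_of_IsFiniteMeasure fun f => h f f.continuous

end helpers

open scoped Classical in
/-- The probabilistic cellular automaton `τ_ε` is ergodic in the Markov sense: for every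
probability measure `ν` on `A^ℤ`, the iterates `ν τ_ε^n` converge weakly (i.e. integrals of
continuous functions on the compact metrizable space `A^ℤ` converge) to the uniform product
measure `μ`; in particular `μ` is the unique `τ_ε`-invariant probability measure.
Here `μ` and the error law `ν_ε` are characterized by their values on cylinder sets. -/
theorem stmt9 {A : Type*} [Fintype A] [AddCommGroup A] [MeasurableSpace A]
    [MeasurableSingletonClass A] [TopologicalSpace A] [DiscreteTopology A]
    (hA : 1 < Fintype.card A)
    (μ : Measure (ℤ → A)) [IsProbabilityMeasure μ]
    (hμ : ∀ (s : Finset ℤ) (y : ℤ → A),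
      μ {ω | ∀ i ∈ s, ω i = y i} = (Fintype.card A : ENNReal)⁻¹ ^ s.card)
    (ε : ℝ) (hε0 : 0 < ε)
    (hε1 : ε < ((Fintype.card A : ℝ) - 1) / (Fintype.card A : ℝ))
    (νε : Measure (ℤ → A)) [IsProbabilityMeasure νε]
    (hνε : ∀ (s : Finset ℤ) (y : ℤ → A),
      νε {ξ | ∀ i ∈ s, ξ i = y i}
        = ∏ i ∈ s, (if y i = 0 then ENNReal.ofReal (1 - ε)
            else ENNReal.ofReal (ε / ((Fintype.card A : ℝ) - 1)))) :
    (∀ ν : Measure (ℤ → A), IsProbabilityMeasure ν →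
      ∀ g : (ℤ → A) → ℝ, Continuous g →
        Tendsto (fun n : ℕ => ∫ x, g x ∂((stepTauEps νε)^[n] ν)) atTop
          (nhds (∫ x, g x ∂μ)))
    ∧ ∀ ν : Measure (ℤ → A), IsProbabilityMeasure ν → stepTauEps νε ν = ν → ν = μ := by
  classical
  have hc : (1:ℝ) < Fintype.card A := by exact_mod_cast hA
  set c : ℝ := (Fintype.card A : ℝ) with hcdef
  set w : A → ENNReal := fun a => if a = 0 then ENNReal.ofReal (1 - ε)
            else ENNReal.ofReal (ε / (c - 1)) with hw
  have hεc : ε * c < c - 1 := by rwa [lt_div_iff₀ (by linarith)] at hε1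
  have hε2 : ε ≤ 1 := by nlinarith
  have hd : 0 ≤ ε / (c - 1) := div_nonneg hε0.le (by linarith)
  have hwr : ∀ a, ((w a).toReal : ℂ) = (ε / (c - 1) : ℝ) +
      (if a = 0 then ((1 - ε - ε / (c - 1) : ℝ) : ℂ) else 0) := by
    intro a
    by_cases h : a = 0
    · simp only [hw, h, if_true]
      rw [ENNReal.toReal_ofReal (by linarith)]
      push_cast; ring
    · simp only [hw, h, if_false]
      rw [ENNReal.toReal_ofReal hd]
      simp
  have hsum : ∀ ψ : AddChar A ℂ, ∑ a, ((w a).toReal : ℂ) * ψ a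
      = (ε / (c - 1) : ℝ) * ∑ a, ψ a + (1 - ε - ε / (c - 1) : ℝ) := by
    intro ψ
    simp only [hwr, add_mul, Finset.sum_add_distrib, Finset.mul_sum, ite_mul, zero_mul]
    simp
  set r : ℝ := 1 - ε - ε / (c - 1) with hr
  have hr0 : 0 ≤ r := by
    have : ε / (c - 1) ≤ 1 - ε := by
      rw [div_le_iff₀ (by linarith)]; nlinarith
    linarith
  have hr1 : r < 1 := by linarith
  have hw1 : ∑ a, ((w a).toReal : ℂ) = 1 := by
    have h1 := hsum 1
    simp only [AddChar.one_apply, mul_one, Finset.sum_const, Finset.card_univ, nsmul_eq_mul] at h1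
    rw [h1]
    have h2 : ε / (c - 1) * c + r = 1 := by
      have : c - 1 ≠ 0 := by linarith
      rw [hr]; field_simp; ring
    exact_mod_cast h2
  have hP := decay νε w hνε r hr0 hr1.le hw1 (by
    intro ψ hψ
    rw [hsum, AddChar.sum_eq_zero_iff_ne_zero.2 hψ]
    simp [abs_of_nonneg hr0])
  have hM := decay μ (fun _ => (Fintype.card A : ENNReal)⁻¹) (by simpa using hμ) 0 le_rfl zero_le_one
    (by
      have : (Fintype.card A : ℂ) ≠ 0 := by
        have : Fintype.card A ≠ 0 := by omega
        exact_mod_cast this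
      simp [this])
    (by
      intro ψ hψ
      rw [← Finset.mul_sum, AddChar.sum_eq_zero_iff_ne_zero.2 hψ]
      simp)
  have main : ∀ ν : Measure (ℤ → A), IsProbabilityMeasure ν →
      ∀ g : (ℤ → A) → ℝ, Continuous g →
        Tendsto (fun n : ℕ => ∫ x, g x ∂((stepTauEps νε)^[n] ν)) atTop
          (nhds (∫ x, g x ∂μ)) := by
    intro ν hν g hg
    have := isProb_iter νε ν
    exact tendsto_real (fun n => (stepTauEps νε)^[n] ν) μ
      (fun s ψ hs => chE_tendsto νε μ r hr0 hr1 hP hM ν s ψ hs) g hg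
  refine ⟨main, fun ν hν hinv => meas_ext ν μ fun g hg => ?_⟩
  have h1 := main ν hν g hg
  have h2 : ∀ n, (stepTauEps νε)^[n] ν = ν := fun n => Function.iterate_fixed hinv n
  simp only [h2] at h1
  exact tendsto_nhds_unique tendsto_const_nhds h1
end

section
/- Let (X,d) be a compact metric space, Q a Markov kernel on X, and μ a probability measure on X invariant under Q. Assume the following coupling hypothesis: for every δ > 0 there exists M ∈ ℕ such that for every n ≥ M there is a Markov kernel K from X × X to X × X such that for all (x',x'') ∈ X × X, the first marginal of K((x',x''),·) equals Q^n(x',·), the second marginal equals Q^n(x'',·), and K((x',x''), {(y,z) : d(y,z) > δ}) < δ. Then for every probability measure ν on X, the sequence νQ^n converges to μ in the topology of weak convergence of probability measures; in particular μ is the unique Q-invariant probability measure. -/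
open MeasureTheory ProbabilityTheory Filter

/-- The `n`-fold composition `Q^n` of a Markov kernel with itself. -/
noncomputable def kpow {X : Type*} [MeasurableSpace X] (Q : Kernel X X) : ℕ → Kernel X X
  | 0 => Kernel.id
  | n + 1 => Q.comp (kpow Q n)

theorem kpow_markov {X : Type*} [MeasurableSpace X] (Q : Kernel X X) [IsMarkovKernel Q] (n : ℕ) :
    IsMarkovKernel (kpow Q n) := by
  induction n with
  | zero => unfold kpow; infer_instance
  | succ n ih => unfold kpow; infer_instance

theorem kpow_inv {X : Type*} [MeasurableSpace X] (Q : Kernel X X)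
    (μ : Measure X) (hinv : μ.bind (fun x => Q x) = μ) (n : ℕ) :
    μ.bind (fun x => kpow Q n x) = μ := by
  induction n with
  | zero => unfold kpow; exact Measure.id_comp
  | succ n ih =>
    unfold kpow
    have h : Q ∘ₘ (kpow Q n ∘ₘ μ) = (Q ∘ₖ kpow Q n) ∘ₘ μ := Measure.comp_assoc
    refine h.symm.trans ?_
    have ih' : kpow Q n ∘ₘ μ = μ := ih
    rw [ih']
    exact hinv

theorem cpl_bound {X : Type*} [MetricSpace X] [CompactSpace X]
    [MeasurableSpace X] [BorelSpace X]
    (Q : Kernel X X) [IsMarkovKernel Q]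
    (hcpl : ∀ δ : ℝ, 0 < δ → ∃ M : ℕ, ∀ n : ℕ, M ≤ n →
      ∃ K : Kernel (X × X) (X × X), IsMarkovKernel K ∧
        (∀ p : X × X, (K p).map Prod.fst = kpow Q n p.1) ∧
        (∀ p : X × X, (K p).map Prod.snd = kpow Q n p.2) ∧
        (∀ p : X × X, K p {q : X × X | δ < dist q.1 q.2} < ENNReal.ofReal δ))
    (g : X → ℝ) (hg : Continuous g) (ε : ℝ) (hε : 0 < ε) :
    ∃ M : ℕ, ∀ n, M ≤ n → ∀ x y, |∫ z, g z ∂(kpow Q n x) - ∫ z, g z ∂(kpow Q n y)| ≤ ε := by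
  obtain ⟨C, hC⟩ := isCompact_univ.exists_bound_of_continuousOn hg.continuousOn
  have huc := CompactSpace.uniformContinuous_of_continuous hg
  obtain ⟨δ₀, hδ₀, hd⟩ := Metric.uniformContinuous_iff.1 huc (ε / 2) (by positivity)
  set B : ℝ := |C| + 1 with hB
  have hBpos : 0 < B := by positivity
  have hgB : ∀ x, |g x| ≤ B := fun x => by
    have := hC x (Set.mem_univ x)
    rw [Real.norm_eq_abs] at this
    linarith [le_abs_self C]
  set δ : ℝ := min (δ₀ / 2) (ε / (4 * B)) with hδ
  have hδpos : 0 < δ := by positivity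
  obtain ⟨M, hM⟩ := hcpl δ hδpos
  refine ⟨M, fun n hn x y => ?_⟩
  obtain ⟨K, hK, h1, h2, h3⟩ := hM n hn
  have h1 := h1 (x, y)
  have h2 := h2 (x, y)
  have h3 := h3 (x, y)
  simp only at h1 h2
  have hS : MeasurableSet {q : X × X | δ < dist q.1 q.2} :=
    (isOpen_lt continuous_const (by fun_prop)).measurableSet
  set S := {q : X × X | δ < dist q.1 q.2} with hSdef
  have i1 : Integrable (fun q : X × X => g q.1) (K (x, y)) :=
    Integrable.of_bound (by fun_prop) B (ae_of_all _ fun q => hgB q.1)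
  have i2 : Integrable (fun q : X × X => g q.2) (K (x, y)) :=
    Integrable.of_bound (by fun_prop) B (ae_of_all _ fun q => hgB q.2)
  rw [← h1, ← h2, integral_map (by fun_prop) (by fun_prop),
    integral_map (by fun_prop) (by fun_prop), ← integral_sub i1 i2]
  have iS : Integrable (S.indicator (fun _ => 2 * B)) (K (x, y)) :=
    (integrable_const _).indicator hS
  calc |∫ q, (g q.1 - g q.2) ∂(K (x, y))| ≤ ∫ q, |g q.1 - g q.2| ∂(K (x, y)) :=
        abs_integral_le_integral_abs
    _ ≤ ∫ q, (ε / 2 + S.indicator (fun _ => 2 * B) q) ∂(K (x, y)) := by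
        refine integral_mono (i1.sub i2).abs ((integrable_const _).add iS) fun q => ?_
        by_cases hq : q ∈ S
        · simp only [Set.indicator_of_mem hq]
          have := abs_sub (g q.1) (g q.2)
          linarith [hgB q.1, hgB q.2]
        · simp only [Set.indicator_of_notMem hq]
          have hq' : dist q.1 q.2 ≤ δ := not_lt.1 hq
          have := hd (a := q.1) (b := q.2) (by linarith [min_le_left (δ₀ / 2) (ε / (4 * B))])
          rw [Real.dist_eq] at this
          linarith
    _ = ε / 2 + (K (x, y)).real S * (2 * B) := by
        rw [integral_add (integrable_const _) iS, integral_indicator_const _ hS]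
        simp
    _ ≤ ε / 2 + δ * (2 * B) := by
        gcongr
        exact ENNReal.toReal_le_of_le_ofReal hδpos.le h3.le
    _ ≤ ε / 2 + ε / (4 * B) * (2 * B) := by
        gcongr
        exact min_le_right _ _
    _ = ε := by field_simp; ring

theorem stmt10_conv {X : Type*} [MetricSpace X] [CompactSpace X]
    [MeasurableSpace X] [BorelSpace X]
    (Q : Kernel X X) [IsMarkovKernel Q]
    (μ : Measure X) [IsProbabilityMeasure μ]
    (hinv : μ.bind (fun x => Q x) = μ)
    (hcpl : ∀ δ : ℝ, 0 < δ → ∃ M : ℕ, ∀ n : ℕ, M ≤ n →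
      ∃ K : Kernel (X × X) (X × X), IsMarkovKernel K ∧
        (∀ p : X × X, (K p).map Prod.fst = kpow Q n p.1) ∧
        (∀ p : X × X, (K p).map Prod.snd = kpow Q n p.2) ∧
        (∀ p : X × X, K p {q : X × X | δ < dist q.1 q.2} < ENNReal.ofReal δ))
    (ν : Measure X) (hν : IsProbabilityMeasure ν) (g : X → ℝ) (hg : Continuous g) :
    Tendsto (fun n : ℕ => ∫ x, g x ∂(ν.bind (fun x => kpow Q n x))) atTop
          (nhds (∫ x, g x ∂μ)) := by
  rw [Metric.tendsto_atTop]
  intro ε hε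
  obtain ⟨M, hM⟩ := cpl_bound Q hcpl g hg (ε / 2) (by positivity)
  refine ⟨M, fun n hn => ?_⟩
  have hmk := kpow_markov Q n
  have hM := hM n hn
  obtain ⟨C, hC⟩ := isCompact_univ.exists_bound_of_continuousOn hg.continuousOn
  have hi : ∀ (m : Measure X) [IsProbabilityMeasure m], Integrable g m := fun m _ =>
    Integrable.of_bound (by fun_prop) C (ae_of_all _ fun q => hC q (Set.mem_univ q))
  have key : ∀ (m : Measure X) [IsProbabilityMeasure m],
      ∫ x, g x ∂(m.bind (fun x => kpow Q n x)) = ∫ x, ∫ z, g z ∂(kpow Q n x) ∂m := by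
    intro m _
    have hh : (kpow Q n ∘ₖ Kernel.const Unit m) () = m.bind (fun x => kpow Q n x) := by
      rw [Kernel.comp_apply, Kernel.const_apply]
    have h2 := Kernel.integral_comp (η := kpow Q n) (κ := Kernel.const Unit m) (a := ())
      (hi ((kpow Q n ∘ₖ Kernel.const Unit m) ()))
    rw [hh, Kernel.const_apply] at h2
    exact h2
  have hF : ∀ (m : Measure X) [IsProbabilityMeasure m],
      Integrable (fun x => ∫ z, g z ∂(kpow Q n x)) m := by
    intro m _
    have h2 := Integrable.integral_comp (η := kpow Q n) (κ := Kernel.const Unit m) (a := ())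
      (hi ((kpow Q n ∘ₖ Kernel.const Unit m) ()))
    rw [Kernel.const_apply] at h2
    exact h2
  have e : ∫ x, g x ∂μ = ∫ x, ∫ z, g z ∂(kpow Q n x) ∂μ := by
    rw [← key μ, kpow_inv Q μ hinv n]
  rw [e, key ν, Real.dist_eq]
  set F : X → ℝ := fun x => ∫ z, g z ∂(kpow Q n x)
  have step : ∀ x, |F x - ∫ y, F y ∂μ| ≤ ε / 2 := by
    intro x
    have : F x - ∫ y, F y ∂μ = ∫ y, (F x - F y) ∂μ := by
      rw [integral_sub (integrable_const _) (hF μ)]; simp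
    rw [this]
    have := norm_integral_le_of_norm_le_const (μ := μ) (f := fun y => F x - F y)
      (ae_of_all _ fun y => hM x y)
    simpa using this
  have : ∫ x, F x ∂ν - ∫ y, F y ∂μ = ∫ x, (F x - ∫ y, F y ∂μ) ∂ν := by
    rw [integral_sub (hF ν) (integrable_const _)]; simp
  rw [this]
  have := norm_integral_le_of_norm_le_const (μ := ν) (f := fun x => F x - ∫ y, F y ∂μ)
      (ae_of_all _ step)
  simp at this
  linarith

/-- Let `Q` be a Markov kernel on a compact metric space `X` and `μ` a `Q`-invariant
probability measure. If for every `δ > 0` there is `M` such that for every `n ≥ M` there is a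
Markov coupling kernel `K` on `X × X` whose marginals at `(x',x'')` are `Q^n(x',·)` and
`Q^n(x'',·)` and which gives mass `< δ` to `{(y,z) : d(y,z) > δ}`, then `ν Q^n` converges
weakly to `μ` for every probability measure `ν`; in particular `μ` is the unique
`Q`-invariant probability measure. -/
theorem stmt10 {X : Type*} [MetricSpace X] [CompactSpace X]
    [MeasurableSpace X] [BorelSpace X]
    (Q : Kernel X X) [IsMarkovKernel Q]
    (μ : Measure X) [IsProbabilityMeasure μ]
    (hinv : μ.bind (fun x => Q x) = μ)
    (hcpl : ∀ δ : ℝ, 0 < δ → ∃ M : ℕ, ∀ n : ℕ, M ≤ n →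
      ∃ K : Kernel (X × X) (X × X), IsMarkovKernel K ∧
        (∀ p : X × X, (K p).map Prod.fst = kpow Q n p.1) ∧
        (∀ p : X × X, (K p).map Prod.snd = kpow Q n p.2) ∧
        (∀ p : X × X, K p {q : X × X | δ < dist q.1 q.2} < ENNReal.ofReal δ)) :
    (∀ ν : Measure X, IsProbabilityMeasure ν →
      ∀ g : X → ℝ, Continuous g →
        Tendsto (fun n : ℕ => ∫ x, g x ∂(ν.bind (fun x => kpow Q n x))) atTop
          (nhds (∫ x, g x ∂μ)))
    ∧ ∀ ν : Measure X, IsProbabilityMeasure ν → ν.bind (fun x => Q x) = ν → ν = μ := by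
  refine ⟨stmt10_conv Q μ hinv hcpl, fun ν hν hνinv => ?_⟩
  refine ext_of_forall_integral_eq_of_IsFiniteMeasure fun f => ?_
  have h := stmt10_conv Q μ hinv hcpl ν hν f f.continuous
  simp only [kpow_inv Q ν hνinv] at h
  exact tendsto_nhds_unique tendsto_const_nhds h
end

section
/- Let (Ω,P,T) be a measure-preserving dynamical system and let X', X'' : Ω → A^ℤ be measurable maps that are equivariant, i.e. X' ∘ T = σ ∘ X' and X'' ∘ T = σ ∘ X'' almost surely. Let k ∈ ℕ, and suppose that the random variables τ^k ∘ X' and τ^k ∘ X'' are independent and each has law μ. Then P( X'(ω)(0) = X''(ω)(0) ) = 1/|A|. (Consequently, in any dynamical real-time coupling of the factor filtration generated by (τ^n X_0)_{n∈ℕ} which is independent in the distant past, the two copies of the coordinate X_0(0) agree only with probability 1/|A|, so this factor filtration is not dynamically I-cosy and hence not dynamically standard.) -/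
open MeasureTheory

lemma tau_iter_sub {A : Type*} [AddCommGroup A] (k : ℕ) (x y : ℤ → A) :
    tau^[k] (fun i => x i - y i) = fun i => tau^[k] x i - tau^[k] y i := by
  induction k generalizing x y with
  | zero => rfl
  | succ k ih =>
    rw [Function.iterate_succ_apply, Function.iterate_succ_apply, Function.iterate_succ_apply,
      ← ih]
    congr 1
    funext i
    simp only [tau]
    abel

lemma tau_iter_local {A : Type*} [AddCommGroup A] (k : ℕ) (x y : ℤ → A) (i : ℤ)
    (h : ∀ j : ℤ, i ≤ j → j ≤ i + k → x j = y j) : tau^[k] x i = tau^[k] y i := by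
  induction k generalizing x y with
  | zero => exact h i le_rfl (by simp)
  | succ k ih =>
    rw [Function.iterate_succ_apply, Function.iterate_succ_apply]
    apply ih
    intro j h1 h2
    simp only [tau]
    rw [h j h1 (by push_cast; omega), h (j + 1) (by omega) (by push_cast; omega)]

lemma measurable_tau_iter {A : Type*} [Fintype A] [AddCommGroup A] [MeasurableSpace A]
    [MeasurableSingletonClass A] (k : ℕ) : Measurable (tau^[k] : (ℤ → A) → (ℤ → A)) := by
  apply Measurable.iterate
  refine measurable_pi_lambda _ fun i => ?_
  have h : Measurable (fun p : A × A => p.1 + p.2) := measurable_of_countable _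
  have h2 : Measurable (fun x : ℤ → A => (x i, x (i + 1))) :=
    (measurable_pi_apply i).prodMk (measurable_pi_apply (i + 1))
  exact h.comp h2

lemma sum_sq_bound {A : Type*} [Fintype A] (h : A → ℝ) (h0 : ∑ a, h a = 0)
    (h1 : ∑ a, h a ^ 2 ≤ Fintype.card A) (N : ℕ) :
    ∑ w : Fin N → A, (∑ i, h (w i)) ^ 2 ≤ N * (Fintype.card A : ℝ) ^ N := by
  induction N with
  | zero => simp
  | succ N ih =>
    rw [← (Fin.consEquiv (fun _ : Fin (N + 1) => A)).sum_comp, Fintype.sum_prod_type]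
    simp only [Fin.consEquiv_apply, Fin.sum_univ_succ, Fin.cons_zero, Fin.cons_succ]
    have e : ∀ a : A, ∑ w : Fin N → A, (h a + ∑ i, h (w i)) ^ 2
        = (Fintype.card A : ℝ) ^ N * h a ^ 2 + h a * (2 * ∑ w : Fin N → A, ∑ i, h (w i))
          + ∑ w : Fin N → A, (∑ i, h (w i)) ^ 2 := by
      intro a
      simp only [add_sq, Finset.sum_add_distrib, Finset.mul_sum]
      simp [Finset.card_univ, mul_comm, mul_left_comm]
    simp only [e, Finset.sum_add_distrib, ← Finset.mul_sum, ← Finset.sum_mul, h0]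
    simp only [Finset.sum_const, Finset.card_univ, nsmul_eq_mul]
    have hm : (0 : ℝ) ≤ Fintype.card A := by positivity
    have := mul_le_mul_of_nonneg_left ih hm
    have := mul_le_mul_of_nonneg_left h1 (pow_nonneg hm N)
    push_cast
    rw [pow_succ]
    nlinarith

lemma sq_sum_le {ι : Type*} [Fintype ι] (q g : ι → ℝ) (B : ℝ) (hq0 : ∀ w, 0 ≤ q w)
    (hq1 : ∑ w, q w = 1) (hB : ∀ w, q w ≤ B) :
    (∑ w, q w * g w) ^ 2 ≤ B * ∑ w, g w ^ 2 := by
  set c := ∑ w, q w * g w with hc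
  have h1 : 0 ≤ ∑ w, q w * (g w - c) ^ 2 :=
    Finset.sum_nonneg fun w _ => mul_nonneg (hq0 w) (sq_nonneg _)
  have h2 : ∑ w, q w * (g w - c) ^ 2 = ∑ w, q w * g w ^ 2 - c ^ 2 := by
    have : ∀ w, q w * (g w - c) ^ 2 = q w * g w ^ 2 - (q w * g w) * (2 * c) + q w * c ^ 2 := by
      intro w; ring
    simp only [this, Finset.sum_add_distrib, Finset.sum_sub_distrib, ← Finset.sum_mul, hq1, ← hc]
    ring
  have h3 : ∑ w, q w * g w ^ 2 ≤ B * ∑ w, g w ^ 2 := by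
    rw [Finset.mul_sum]
    exact Finset.sum_le_sum fun w _ => mul_le_mul_of_nonneg_right (hB w) (sq_nonneg _)
  linarith

/-- A process with all one-dimensional marginals equal and a bounded density on windows with
respect to the uniform law has uniform marginals. -/
lemma marginal_uniform {A : Type*} [Fintype A] [MeasurableSpace A]
    [MeasurableSingletonClass A] (hA : 0 < Fintype.card A)
    {Ω : Type*} [MeasurableSpace Ω] (P : Measure Ω) [IsProbabilityMeasure P]
    (Z : ℕ → Ω → A) (hZ : ∀ i, Measurable (Z i)) (a : A)
    (hst : ∀ i, P.real {ω | Z i ω = a} = P.real {ω | Z 0 ω = a})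
    (C : ℝ) (hC : ∀ (N : ℕ) (w : Fin N → A),
      P.real {ω | ∀ i : Fin N, Z i ω = w i} * (Fintype.card A : ℝ) ^ N ≤ C) :
    P.real {ω | Z 0 ω = a} = (Fintype.card A : ℝ)⁻¹ := by
  classical
  set p := P.real {ω | Z 0 ω = a} with hp
  set m : ℝ := ((Fintype.card A : ℕ) : ℝ) with hm
  have hm0 : 0 < m := by rw [hm]; exact_mod_cast hA
  have hm1 : 1 ≤ m := by rw [hm]; exact_mod_cast hA
  let h : A → ℝ := fun b => (if b = a then 1 else 0) - m⁻¹
  have hs0 : ∑ b, h b = 0 := by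
    simp only [h, Finset.sum_sub_distrib]
    simp [Finset.card_univ, ← hm, hm0.ne']
  have hs1 : ∑ b, h b ^ 2 ≤ Fintype.card A := by
    have hinv : m⁻¹ ≤ 1 := inv_le_one_of_one_le₀ hm1
    have hinv0 : 0 ≤ m⁻¹ := by positivity
    have : ∀ b ∈ Finset.univ, h b ^ 2 ≤ 1 := by
      intro b _
      simp only [h]
      split_ifs <;> nlinarith
    calc ∑ b, h b ^ 2 ≤ ∑ b : A, (1 : ℝ) := Finset.sum_le_sum this
      _ = _ := by simp [Finset.card_univ]
  have key : ∀ N : ℕ, N * (p - m⁻¹) ^ 2 ≤ C := by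
    intro N
    rcases Nat.eq_zero_or_pos N with rfl | hN
    · have := hC 0 Fin.elim0
      have h0 : 0 ≤ P.real {ω | ∀ i : Fin 0, Z i ω = Fin.elim0 i} := measureReal_nonneg
      simp at this ⊢
      linarith
    let W : Ω → (Fin N → A) := fun ω i => Z i ω
    have hW : Measurable W := measurable_pi_lambda _ fun i => hZ i
    have : IsProbabilityMeasure (P.map W) := Measure.isProbabilityMeasure_map hW.aemeasurable
    let q : (Fin N → A) → ℝ := fun w => (P.map W).real {w}
    have hqe : ∀ w, q w = P.real {ω | ∀ i : Fin N, Z i ω = w i} := by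
      intro w
      simp only [q]
      rw [map_measureReal_apply hW (measurableSet_singleton w)]
      congr 1
      ext ω
      simp [W, funext_iff]
    have hq1 : ∑ w, q w = 1 := by
      simp only [q]
      rw [sum_measureReal_singleton]
      simp
    have hmp : 0 < m ^ N := by positivity
    have hb := sq_sum_le q (fun w => ∑ i, h (w i)) (C / m ^ N) (fun w => measureReal_nonneg) hq1
      (fun w => by rw [hqe, le_div_iff₀ hmp]; exact hC N w)
    have hE : ∑ w, q w * ∑ i, h (w i) = N * (p - m⁻¹) := by
      have e1 : ∫ ω, ∑ i, h (W ω i) ∂P = ∑ w, q w * ∑ i, h (w i) := by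
        rw [← integral_map (φ := W) (f := fun w => ∑ i, h (w i)) hW.aemeasurable
          (measurable_of_countable _).aestronglyMeasurable, integral_fintype (Integrable.of_finite)]
        simp [q]
      have hint : ∀ i, Integrable (fun ω => Set.indicator {ω | Z i ω = a} (fun _ => (1:ℝ)) ω) P :=
        fun i => (integrable_const _).indicator (hZ i (measurableSet_singleton a))
      have hh : ∀ (i : ℕ) ω, h (Z i ω) =
          Set.indicator {ω | Z i ω = a} (fun _ => (1:ℝ)) ω - m⁻¹ := by
        intro i ω
        simp [h, Set.indicator_apply]
      rw [← e1]
      simp only [W, hh]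
      have hint2 : ∀ i : ℕ, Integrable
          (fun ω => Set.indicator {ω | Z i ω = a} (fun _ => (1:ℝ)) ω - m⁻¹) P :=
        fun i => (hint i).sub (integrable_const _)
      rw [integral_finsetSum _ fun (i : Fin N) _ => hint2 i]
      have : ∀ i : ℕ, ∫ ω, (Set.indicator {ω | Z i ω = a} (fun _ => (1:ℝ)) ω - m⁻¹) ∂P
          = p - m⁻¹ := by
        intro i
        rw [integral_sub (hint i) (integrable_const _),
          integral_indicator (show MeasurableSet {ω | Z i ω = a} from
            hZ i (measurableSet_singleton a))]
        simp [hst i]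
      simp [this]
      ring
    rw [hE] at hb
    have hS := sum_sq_bound h hs0 hs1 N
    have hC0 : 0 ≤ C := le_trans (mul_nonneg measureReal_nonneg hmp.le) (hC N (fun _ => a))
    have h2 := hb.trans (mul_le_mul_of_nonneg_left hS (div_nonneg hC0 hmp.le))
    have h3 : C / m ^ N * (N * m ^ N) = N * C := by field_simp
    rw [← hm, h3] at h2
    have hNp : (0 : ℝ) < N := by exact_mod_cast hN
    have : (N : ℝ) * (N * (p - m⁻¹) ^ 2) ≤ N * C := by nlinarith
    exact le_of_mul_le_mul_left this hNp
  by_contra hne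
  have hpos : 0 < (p - m⁻¹) ^ 2 := by
    have : p - m⁻¹ ≠ 0 := sub_ne_zero.mpr hne
    positivity
  obtain ⟨N, hN⟩ := exists_nat_gt (C / (p - m⁻¹) ^ 2)
  rw [div_lt_iff₀ hpos] at hN
  exact absurd (key N) (not_le.mpr hN)

/-- Let `(Ω, P, T)` be a measure-preserving dynamical system and `X', X'' : Ω → A^ℤ`
measurable maps which are equivariant (`X' ∘ T = σ ∘ X'` a.s., where `σ` is the left shift).
If for some `k` the random variables `τ^k ∘ X'` and `τ^k ∘ X''` are independent, each with
law the uniform product measure `μ` (characterized on cylinder sets), then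
`P(X'(ω)(0) = X''(ω)(0)) = 1/|A|`. -/
theorem stmt12 {A : Type*} [Fintype A] [AddCommGroup A] [MeasurableSpace A]
    [MeasurableSingletonClass A] (hA : 1 < Fintype.card A)
    (μ : Measure (ℤ → A)) [IsProbabilityMeasure μ]
    (hμ : ∀ (s : Finset ℤ) (y : ℤ → A),
      μ {ω | ∀ i ∈ s, ω i = y i} = (Fintype.card A : ENNReal)⁻¹ ^ s.card)
    {Ω : Type*} [MeasurableSpace Ω] (P : Measure Ω) [IsProbabilityMeasure P]
    (T : Ω → Ω) (hT : Measurable T) (hTP : Measure.map T P = P)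
    (X' X'' : Ω → (ℤ → A)) (hX' : Measurable X') (hX'' : Measurable X'')
    (hE' : ∀ᵐ ω ∂P, X' (T ω) = fun i => X' ω (i + 1))
    (hE'' : ∀ᵐ ω ∂P, X'' (T ω) = fun i => X'' ω (i + 1))
    (k : ℕ)
    (hind : ProbabilityTheory.IndepFun
      (fun ω => tau^[k] (X' ω)) (fun ω => tau^[k] (X'' ω)) P)
    (hL' : Measure.map (fun ω => tau^[k] (X' ω)) P = μ)
    (hL'' : Measure.map (fun ω => tau^[k] (X'' ω)) P = μ) :
    P {ω | X' ω 0 = X'' ω 0} = (Fintype.card A : ENNReal)⁻¹ := by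
  classical
  have hmsub : Measurable (fun p : A × A => p.1 - p.2) := measurable_of_countable _
  have hmX' : ∀ i, Measurable fun ω => X' ω i := fun i => (measurable_pi_apply i).comp hX'
  have hmX'' : ∀ i, Measurable fun ω => X'' ω i := fun i => (measurable_pi_apply i).comp hX''
  let Z : ℤ → Ω → A := fun i ω => X' ω i - X'' ω i
  have hZ : ∀ i, Measurable (Z i) := fun i => hmsub.comp ((hmX' i).prodMk (hmX'' i))
  have hcard : (Fintype.card A : ENNReal) ≠ 0 := by
    exact_mod_cast (show Fintype.card A ≠ 0 by omega)
  -- law of the differences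
  have hY' : Measurable fun ω => tau^[k] (X' ω) := (measurable_tau_iter k).comp hX'
  have hY'' : Measurable fun ω => tau^[k] (X'' ω) := (measurable_tau_iter k).comp hX''
  have hlaw : ∀ (s : Finset ℤ) (y : ℤ → A),
      P {ω | ∀ i ∈ s, tau^[k] (X' ω) i - tau^[k] (X'' ω) i = y i}
        = (Fintype.card A : ENNReal)⁻¹ ^ s.card := by
    intro s y
    have hprod := (ProbabilityTheory.indepFun_iff_map_prod_eq_prod_map_map
      hY'.aemeasurable hY''.aemeasurable).mp hind
    rw [hL', hL''] at hprod
    have hS : MeasurableSet {z : (ℤ → A) × (ℤ → A) | ∀ i ∈ s, z.1 i - z.2 i = y i} := by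
      have : {z : (ℤ → A) × (ℤ → A) | ∀ i ∈ s, z.1 i - z.2 i = y i}
          = ⋂ i ∈ s, (fun z : (ℤ → A) × (ℤ → A) => z.1 i - z.2 i) ⁻¹' {y i} := by
        ext z; simp
      rw [this]
      refine Finset.measurableSet_biInter _ fun i _ => ?_
      have h1 : Measurable (fun z : (ℤ → A) × (ℤ → A) => z.1 i) :=
        (measurable_pi_apply i).comp measurable_fst
      have h2 : Measurable (fun z : (ℤ → A) × (ℤ → A) => z.2 i) :=
        (measurable_pi_apply i).comp measurable_snd
      have h3 : Measurable (fun z : (ℤ → A) × (ℤ → A) => (z.1 i, z.2 i)) := h1.prodMk h2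
      exact (hmsub.comp h3) (measurableSet_singleton _)
    have e : P {ω | ∀ i ∈ s, tau^[k] (X' ω) i - tau^[k] (X'' ω) i = y i}
        = (μ.prod μ) {z : (ℤ → A) × (ℤ → A) | ∀ i ∈ s, z.1 i - z.2 i = y i} := by
      rw [← hprod, Measure.map_apply (hY'.prodMk hY'') hS]
      rfl
    rw [e, Measure.prod_apply_symm hS]
    have : ∀ v : ℤ → A, μ ((fun x => (x, v)) ⁻¹'
        {z : (ℤ → A) × (ℤ → A) | ∀ i ∈ s, z.1 i - z.2 i = y i})
        = (Fintype.card A : ENNReal)⁻¹ ^ s.card := by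
      intro v
      rw [← hμ s (fun i => y i + v i)]
      congr 1
      ext x
      simp [sub_eq_iff_eq_add]
    simp only [this]
    simp
  -- stationarity
  have hstat : ∀ (i : ℕ), P {ω | Z i ω = 0} = P {ω | Z 0 ω = 0} := by
    intro i
    induction i with
    | zero => rfl
    | succ n ih =>
      rw [← ih]
      have hs : MeasurableSet {ω | Z n ω = 0} := hZ n (measurableSet_singleton 0)
      conv_rhs => rw [← hTP, Measure.map_apply hT hs]
      apply measure_congr
      filter_upwards [hE', hE''] with ω h1 h2
      apply propext
      change Z ((n + 1 : ℕ) : ℤ) ω = 0 ↔ Z n (T ω) = 0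
      simp [Z, h1, h2]
  have hfin := marginal_uniform (by omega : 0 < Fintype.card A) P (fun i : ℕ => Z i)
    (fun i => hZ i) 0 (fun i => by simp only [measureReal_def, hstat i, Nat.cast_zero])
    ((Fintype.card A : ℝ) ^ k) (by
      intro N w
      have hmR : (1 : ℝ) ≤ Fintype.card A := by exact_mod_cast hA.le
      rcases le_total N k with hNk | hNk
      · calc _ ≤ 1 * (Fintype.card A : ℝ) ^ N :=
              mul_le_mul_of_nonneg_right measureReal_le_one (by positivity)
          _ ≤ _ := by rw [one_mul]; exact pow_le_pow_right₀ hmR hNk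
      obtain ⟨n, rfl⟩ := Nat.exists_eq_add_of_le' hNk
      let wz : ℤ → A := fun j => if hj : j.toNat < n + k then w ⟨j.toNat, hj⟩ else 0
      let s : Finset ℤ := (Finset.range n).map Nat.castEmbedding
      have hsc : s.card = n := by simp [s]
      have hsub : {ω | ∀ i : Fin (n + k), Z ((i : ℕ) : ℤ) ω = w i} ⊆
          {ω | ∀ i ∈ s, tau^[k] (X' ω) i - tau^[k] (X'' ω) i = tau^[k] wz i} := by
        intro ω hω i hi
        have hi' : ∃ j < n, (j : ℤ) = i := by simpa [s] using hi
        obtain ⟨j, hj, rfl⟩ := hi'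
        rw [← congrFun (tau_iter_sub k (X' ω) (X'' ω)) j]
        apply tau_iter_local
        intro l hl1 hl2
        have hl : l.toNat < n + k := by omega
        have := hω ⟨l.toNat, hl⟩
        have hll : ((l.toNat : ℕ) : ℤ) = l := Int.toNat_of_nonneg (by omega)
        simp only [hll] at this
        simp only [wz, hl, dif_pos]
        exact this
      have hle := measureReal_mono (μ := P) hsub
      have hv : P.real {ω | ∀ i ∈ s, tau^[k] (X' ω) i - tau^[k] (X'' ω) i = tau^[k] wz i}
          = ((Fintype.card A : ℝ) ^ n)⁻¹ := by
        rw [measureReal_def, hlaw, hsc]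
        simp
      rw [hv] at hle
      calc _ ≤ ((Fintype.card A : ℝ) ^ n)⁻¹ * (Fintype.card A : ℝ) ^ (n + k) :=
            mul_le_mul_of_nonneg_right hle (by positivity)
        _ = _ := by
          have : (Fintype.card A : ℝ) ≠ 0 := by positivity
          rw [pow_add]; field_simp)
  have hset : {ω | X' ω 0 = X'' ω 0} = {ω | Z ((0 : ℕ) : ℤ) ω = 0} := by
    ext ω
    simp [Z, sub_eq_zero]
  rw [hset, ← ENNReal.toReal_eq_toReal_iff' (measure_ne_top _ _) (ENNReal.inv_ne_top.mpr hcard)]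
  simpa [measureReal_def] using hfin
end

section
/- Fix n₀ ∈ ℤ and u : ℤ × ℤ → [0,1). Declare a site (n,i) ∈ ℤ × ℤ open if u(n,i) ∈ I_? (i.e. u(n,i) < 1−ε̃). Define the envelope process X^env(n,i) ∈ A ∪ {?} for n ≥ n₀ by X^env(n₀,i) = ? for all i, and X^env(n+1,i) = φ_ε^env(X^env(n,i), X^env(n,i+1), u(n+1,i)). Then for every n ≥ n₀+1 and every i ∈ ℤ: X^env(n,i) = ? if and only if there exists j ∈ ℤ and an open oriented path from (n₀+1, j) to (n,i). -/
/-- Given a bijection `e : A ≃ Fin |A|` and `0 < ε̃ < 1`, `aof e εt v` is the letter `a ∈ A`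
such that `v ∈ I_a = [1-ε̃ + e(a)·ε̃/|A|, 1-ε̃ + (e(a)+1)·ε̃/|A|)` (junk value otherwise). -/
noncomputable def aof {A : Type*} [Fintype A] [Nonempty A]
    (e : A ≃ Fin (Fintype.card A)) (εt : ℝ) (v : ℝ) : A :=
  e.symm ⟨(⌊(v - (1 - εt)) * (Fintype.card A : ℝ) / εt⌋).toNat % Fintype.card A,
    Nat.mod_lt _ Fintype.card_pos⟩

/-- The envelope updating function `φ_ε^env` on the alphabet `A ∪ {?}` (as `Option A`, with
`? = none`): it returns `b + c` (resp. `?`) if `u ∈ I_? = [0, 1-ε̃)` and `b, c ∈ A`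
(resp. `? ∈ {b,c}`), and the letter `a` if `u ∈ I_a`. -/
noncomputable def phiEnv {A : Type*} [Fintype A] [Nonempty A] [Add A]
    (e : A ≃ Fin (Fintype.card A)) (εt : ℝ) (b c : Option A) (u : ℝ) : Option A :=
  if u < 1 - εt then Option.map₂ (· + ·) b c else some (aof e εt u)

/-- The envelope process started at time `n₀` from the all-`?` configuration:
`envProc e εt u n₀ m i` is `X^env(n₀ + m, i)`, defined by
`X^env(n₀,·) = ?` and `X^env(n+1,i) = φ_ε^env(X^env(n,i), X^env(n,i+1), u(n+1,i))`. -/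
noncomputable def envProc {A : Type*} [Fintype A] [Nonempty A] [Add A]
    (e : A ≃ Fin (Fintype.card A)) (εt : ℝ) (u : ℤ → ℤ → ℝ) (n₀ : ℤ) :
    ℕ → ℤ → Option A
  | 0 => fun _ => none
  | m + 1 => fun i =>
      phiEnv e εt (envProc e εt u n₀ m i) (envProc e εt u n₀ m (i + 1))
        (u (n₀ + m + 1) i)

/-- Auxiliary form of the coupling, by induction on the number of steps. -/
theorem envProc_aux {A : Type*} [Fintype A] [Nonempty A] [Add A]
    (e : A ≃ Fin (Fintype.card A)) (εt : ℝ) (u : ℤ → ℤ → ℝ) (n₀ : ℤ) (m : ℕ) :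
    ∀ i : ℤ, envProc e εt u n₀ (m + 1) i = none
      ↔ ∃ c : ℤ → ℤ, c (n₀ + m + 1) = i ∧
          (∀ ℓ : ℤ, n₀ + 1 ≤ ℓ → ℓ ≤ n₀ + m → (c (ℓ + 1) = c ℓ ∨ c (ℓ + 1) = c ℓ - 1)) ∧
          (∀ ℓ : ℤ, n₀ + 1 ≤ ℓ → ℓ ≤ n₀ + m + 1 → u ℓ (c ℓ) < 1 - εt) := by
  have step : ∀ (m : ℕ) (i : ℤ), envProc e εt u n₀ (m + 1) i = none ↔
      u (n₀ + m + 1) i < 1 - εt ∧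
        (envProc e εt u n₀ m i = none ∨ envProc e εt u n₀ m (i + 1) = none) := by
    intro m i
    simp only [envProc, phiEnv]
    split_ifs with h
    · simp [h, Option.map₂_eq_none_iff]
    · simp [h]
  induction m with
  | zero =>
    intro i
    rw [step]
    constructor
    · rintro ⟨h, -⟩
      refine ⟨fun _ => i, rfl, fun ℓ _ _ => Or.inl rfl, fun ℓ h1 h2 => ?_⟩
      have : ℓ = n₀ + (0 : ℕ) + 1 := by push_cast at *; omega
      rw [this]; exact h
    · rintro ⟨c, hc, -, ho⟩
      refine ⟨?_, Or.inl rfl⟩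
      rw [← hc]
      exact ho _ (by simp) le_rfl
  | succ m ih =>
    intro i
    rw [step, ih, ih]
    push_cast
    constructor
    · rintro ⟨h, hp⟩
      have hp' : ∃ c : ℤ → ℤ, (c (n₀ + m + 1) = i ∨ c (n₀ + m + 1) = i + 1) ∧
          (∀ ℓ : ℤ, n₀ + 1 ≤ ℓ → ℓ ≤ n₀ + m → (c (ℓ + 1) = c ℓ ∨ c (ℓ + 1) = c ℓ - 1)) ∧
          (∀ ℓ : ℤ, n₀ + 1 ≤ ℓ → ℓ ≤ n₀ + m + 1 → u ℓ (c ℓ) < 1 - εt) := by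
        rcases hp with ⟨c, h1, h2⟩ | ⟨c, h1, h2⟩
        · exact ⟨c, Or.inl h1, h2⟩
        · exact ⟨c, Or.inr h1, h2⟩
      obtain ⟨c, hc, hs, ho⟩ := hp'
      refine ⟨fun ℓ => if ℓ ≤ n₀ + m + 1 then c ℓ else i, ?_, ?_, ?_⟩
      · exact if_neg (by omega)
      · intro ℓ h1 h2
        by_cases hl : ℓ ≤ n₀ + m
        · have a1 : ℓ + 1 ≤ n₀ + m + 1 := by omega
          have a2 : ℓ ≤ n₀ + m + 1 := by omega
          simp only [a1, a2, if_true]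
          exact hs ℓ h1 hl
        · have hl' : ℓ = n₀ + m + 1 := by omega
          have a1 : ¬ (n₀ + m + 1 + 1 ≤ n₀ + (m : ℤ) + 1) := by omega
          subst hl'
          simp only [a1, le_refl, if_true, if_false]
          omega
      · intro ℓ h1 h2
        by_cases hl : ℓ ≤ n₀ + m + 1
        · simp only [hl, if_true]
          exact ho ℓ h1 hl
        · have hl' : ℓ = n₀ + (m + 1) + 1 := by omega
          simp only [hl, if_false]
          rw [hl']; exact h
    · rintro ⟨c, hc, hs, ho⟩
      refine ⟨?_, ?_⟩
      · rw [← hc]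
        exact ho _ (by omega) le_rfl
      · have h1 := hs (n₀ + m + 1) (by omega) (by omega)
        have e1 : n₀ + (m : ℤ) + 1 + 1 = n₀ + (m + 1) + 1 := by ring
        rw [e1, hc] at h1
        have hs' : ∀ ℓ : ℤ, n₀ + 1 ≤ ℓ → ℓ ≤ n₀ + m →
            (c (ℓ + 1) = c ℓ ∨ c (ℓ + 1) = c ℓ - 1) :=
          fun ℓ a b => hs ℓ a (by omega)
        have ho' : ∀ ℓ : ℤ, n₀ + 1 ≤ ℓ → ℓ ≤ n₀ + m + 1 → u ℓ (c ℓ) < 1 - εt :=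
          fun ℓ a b => ho ℓ a (by omega)
        rcases h1 with h1 | h1
        · exact Or.inl ⟨c, h1.symm, hs', ho'⟩
        · exact Or.inr ⟨c, by omega, hs', ho'⟩

/-- Coupling of the envelope process with oriented site percolation (a site `(n,i)` being
open when `u(n,i) < 1 - ε̃`): for `n ≥ n₀ + 1`, one has `X^env(n,i) = ?` if and only if some
site `(n₀+1, j)` leads to `(n,i)` through an open oriented path. -/
theorem stmt13 {A : Type*} [Fintype A] [AddCommGroup A] (hA : 1 < Fintype.card A)
    (ε : ℝ) (hε0 : 0 < ε)
    (hε1 : ε < ((Fintype.card A : ℝ) - 1) / (Fintype.card A : ℝ))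
    (εt : ℝ) (hεt : εt = ε * (Fintype.card A : ℝ) / ((Fintype.card A : ℝ) - 1))
    (e : A ≃ Fin (Fintype.card A)) (u : ℤ → ℤ → ℝ)
    (hu : ∀ n i : ℤ, u n i ∈ Set.Ico (0 : ℝ) 1)
    (n₀ n : ℤ) (hn : n₀ + 1 ≤ n) (i : ℤ) :
    envProc e εt u n₀ (n - n₀).toNat i = none
      ↔ ∃ j : ℤ, ∃ c : ℤ → ℤ, c (n₀ + 1) = j ∧ c n = i ∧
          (∀ ℓ : ℤ, n₀ + 1 ≤ ℓ → ℓ ≤ n - 1 → (c (ℓ + 1) = c ℓ ∨ c (ℓ + 1) = c ℓ - 1)) ∧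
          (∀ ℓ : ℤ, n₀ + 1 ≤ ℓ → ℓ ≤ n → u ℓ (c ℓ) < 1 - εt) := by
  obtain ⟨m, rfl⟩ : ∃ m : ℕ, n = n₀ + m + 1 := ⟨(n - n₀ - 1).toNat, by omega⟩
  have h1 : (n₀ + (m : ℤ) + 1 - n₀).toNat = m + 1 := by omega
  have h2 : n₀ + (m : ℤ) + 1 - 1 = n₀ + m := by ring
  rw [h1, h2, envProc_aux]
  constructor
  · rintro ⟨c, h⟩
    exact ⟨_, c, rfl, h⟩
  · rintro ⟨_, c, -, h⟩
    exact ⟨c, h⟩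
end

section
/- Fix n₀ ∈ ℤ, u : ℤ × ℤ → [0,1), and x ∈ A^ℤ. Define X^x(n,i) ∈ A for n ≥ n₀ by X^x(n₀,i) = x(i) and X^x(n+1,i) = φ_ε(X^x(n,i), X^x(n,i+1), u(n+1,i)), and define the envelope process X^env(n,i) ∈ A ∪ {?} by X^env(n₀,i) = ? and X^env(n+1,i) = φ_ε^env(X^env(n,i), X^env(n,i+1), u(n+1,i)). Then for every n ≥ n₀, every i ∈ ℤ and every a ∈ A: if X^env(n,i) = a (in particular X^env(n,i) ≠ ?), then X^x(n,i) = a, regardless of the initial configuration x. -/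
/-- The updating function `φ_ε : A × A × [0,1) → A`: it returns `b + c` when
`u ∈ I_? = [0, 1-ε̃)` and the letter `a` when `u ∈ I_a`. -/
noncomputable def phiEps {A : Type*} [Fintype A] [Nonempty A] [Add A]
    (e : A ≃ Fin (Fintype.card A)) (εt : ℝ) (b c : A) (u : ℝ) : A :=
  if u < 1 - εt then b + c else aof e εt u

/-- The PCA process started at time `n₀` from the configuration `x`:
`caProc e εt u n₀ x m i = X^x(n₀ + m, i)`, with
`X^x(n₀,·) = x` and `X^x(n+1,i) = φ_ε(X^x(n,i), X^x(n,i+1), u(n+1,i))`. -/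
noncomputable def caProc {A : Type*} [Fintype A] [Nonempty A] [Add A]
    (e : A ≃ Fin (Fintype.card A)) (εt : ℝ) (u : ℤ → ℤ → ℝ) (n₀ : ℤ) (x : ℤ → A) :
    ℕ → ℤ → A
  | 0 => x
  | m + 1 => fun i =>
      phiEps e εt (caProc e εt u n₀ x m i) (caProc e εt u n₀ x m (i + 1))
        (u (n₀ + m + 1) i)

/-- Wherever the envelope process shows a symbol of `A` (not `?`), the PCA process started
from any initial configuration `x` shows that same symbol: for all `n ≥ n₀`, `i ∈ ℤ` and
`a ∈ A`, if `X^env(n,i) = a` then `X^x(n,i) = a`. -/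
theorem stmt14 {A : Type*} [Fintype A] [AddCommGroup A] (hA : 1 < Fintype.card A)
    (ε : ℝ) (hε0 : 0 < ε)
    (hε1 : ε < ((Fintype.card A : ℝ) - 1) / (Fintype.card A : ℝ))
    (εt : ℝ) (hεt : εt = ε * (Fintype.card A : ℝ) / ((Fintype.card A : ℝ) - 1))
    (e : A ≃ Fin (Fintype.card A)) (u : ℤ → ℤ → ℝ)
    (hu : ∀ n i : ℤ, u n i ∈ Set.Ico (0 : ℝ) 1)
    (n₀ : ℤ) (x : ℤ → A) :
    ∀ n : ℤ, n₀ ≤ n → ∀ i : ℤ, ∀ a : A,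
      envProc e εt u n₀ (n - n₀).toNat i = some a →
        caProc e εt u n₀ x (n - n₀).toNat i = a := by
  intro n _
  generalize (n - n₀).toNat = m
  induction m with
  | zero => intro i a h; simp [envProc] at h
  | succ m ih =>
    intro i a h
    simp only [envProc, phiEnv] at h
    simp only [caProc, phiEps]
    split_ifs at h ⊢ with hlt
    · obtain ⟨b, c, hb, hc, hbc⟩ := Option.map₂_eq_some_iff.mp h
      rw [ih i b hb, ih (i + 1) c hc]
      exact hbc
    · exact Option.some.inj h
end

section
/- Fix u : ℤ × ℤ → [0,1). For each starting time n₀ ∈ ℤ, let X^{n₀,env}(n,i) ∈ A ∪ {?} (n ≥ n₀) be defined by X^{n₀,env}(n₀,i) = ? for all i and X^{n₀,env}(n+1,i) = φ_ε^env(X^{n₀,env}(n,i), X^{n₀,env}(n,i+1), u(n+1,i)). Then for all integers n₁ ≤ n₀ ≤ n, every i ∈ ℤ and every a ∈ A: if X^{n₀,env}(n,i) = a (i.e. X^{n₀,env}(n,i) ≠ ?), then X^{n₁,env}(n,i) = a. -/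
/-- The envelope process started `k` steps earlier agrees wherever the later one is determined. -/
theorem envProc_mono_aux {A : Type*} [Fintype A] [Nonempty A] [Add A]
    (e : A ≃ Fin (Fintype.card A)) (εt : ℝ) (u : ℤ → ℤ → ℝ) (n₁ : ℤ) (k m : ℕ) :
    ∀ (i : ℤ) (a : A), envProc e εt u (n₁ + k) m i = some a →
      envProc e εt u n₁ (k + m) i = some a := by
  induction m with
  | zero => intro i a h; simp [envProc] at h
  | succ m ih =>
    intro i a h
    have ht : n₁ + (k : ℤ) + (m : ℤ) + 1 = n₁ + ((k + m : ℕ) : ℤ) + 1 := by push_cast; ring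
    rw [← Nat.add_assoc]
    simp only [envProc, phiEnv] at h ⊢
    rw [ht] at h
    split_ifs at h ⊢ with hc
    · rw [Option.map₂_eq_some_iff] at h ⊢
      obtain ⟨b, c, hb, hc', rfl⟩ := h
      exact ⟨b, c, ih _ _ hb, ih _ _ hc', rfl⟩
    · exact h

/-- Monotonicity of the envelope processes in the starting time: for `n₁ ≤ n₀ ≤ n`, if the
envelope process started at `n₀` shows the symbol `a ∈ A` at site `(n,i)`, then so does the
envelope process started at `n₁`. -/
theorem stmt15 {A : Type*} [Fintype A] [AddCommGroup A] (hA : 1 < Fintype.card A)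
    (ε : ℝ) (hε0 : 0 < ε)
    (hε1 : ε < ((Fintype.card A : ℝ) - 1) / (Fintype.card A : ℝ))
    (εt : ℝ) (hεt : εt = ε * (Fintype.card A : ℝ) / ((Fintype.card A : ℝ) - 1))
    (e : A ≃ Fin (Fintype.card A)) (u : ℤ → ℤ → ℝ)
    (hu : ∀ n i : ℤ, u n i ∈ Set.Ico (0 : ℝ) 1)
    (n₁ n₀ n : ℤ) (h₁₀ : n₁ ≤ n₀) (h₀ : n₀ ≤ n) (i : ℤ) (a : A) :
    envProc e εt u n₀ (n - n₀).toNat i = some a →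
      envProc e εt u n₁ (n - n₁).toNat i = some a := by
  intro h
  obtain ⟨k, rfl⟩ := Int.le.dest h₁₀
  have hk : (n - n₁).toNat = k + (n - (n₁ + (k : ℤ))).toNat := by omega
  rw [hk]
  exact envProc_mono_aux e εt u n₁ k _ i a h
end
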